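/- Let M, a₀, b₀ be natural numbers with a₀ ≤ b₀ ≤ M. Define h : ℕ → ℕ × ℕ by h 0 = (a₀, b₀) and, writing h k = (a, b): h (k+1) = (min(a + 2, M), min(b + 1, M)) if a ≤ b, and h (k+1) = (min(a + 1, M), min(b + 2, M)) otherwise. Then for every k ≥ ⌈max( ((M − a₀) + (M − b₀)) / 3, (M − a₀) / 2 : ℚ)⌉ (integer ceiling of a rational), h k = (M, M). -/

import Mathlib

/-!
Call `M - a` and `M - b` the deficits of the state `(a, b)`. Completing it in `n` slots requires
each deficit to be at most `2 * n` and their sum to be at most `3 * n`, and the dynamics shows that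
this suffices: a slot lowers the larger deficit by 2 and the smaller by 1, which turns the bounds
for `n + 1` into those for `n`. The smaller deficit, although it drops by only 1, satisfies its new
bound because two deficits equal to `2 * n + 2` would exceed the bound `3 * n + 3` on the sum. A
deficit that drops by less because of the cap at `M` is 0 afterwards, and then the bound on the sum
follows from the one on the other deficit.
-/

/-- One slot of the batch scheme on the pair of Has-set sizes: the device with the larger Has set
transmits and gains one packet, the other gains two, and both sizes are capped at `M`. On a tie the
second device transmits. -/
def ncmiSlot (M : ℕ) (s : ℕ × ℕ) : ℕ × ℕ :=
  if s.1 ≤ s.2 then (min (s.1 + 2) M, min (s.2 + 1) M)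
  else (min (s.1 + 1) M, min (s.2 + 2) M)

/-- The packet-counting condition for completing the state `s` within `n` slots. It is symmetric in
the two devices, so that it survives a change of transmitter. -/
structure IsCompletableWithin (M n : ℕ) (s : ℕ × ℕ) : Prop where
  fst_le : s.1 ≤ M
  snd_le : s.2 ≤ M
  fst_deficit_le : M - s.1 ≤ 2 * n
  snd_deficit_le : M - s.2 ≤ 2 * n
  add_deficit_le : (M - s.1) + (M - s.2) ≤ 3 * n

namespace IsCompletableWithin

variable {M n : ℕ} {s : ℕ × ℕ}

theorem eq_of_zero (hs : IsCompletableWithin M 0 s) : s = (M, M) :=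
  Prod.ext (hs.fst_le.antisymm (Nat.sub_eq_zero_iff_le.mp (Nat.le_zero.mp hs.fst_deficit_le)))
    (hs.snd_le.antisymm (Nat.sub_eq_zero_iff_le.mp (Nat.le_zero.mp hs.snd_deficit_le)))

theorem after_ncmiSlot (hs : IsCompletableWithin M (n + 1) s) :
    IsCompletableWithin M n (ncmiSlot M s) := by
  obtain ⟨hfst, hsnd, hfst_deficit, hsnd_deficit, hadd⟩ := hs
  unfold ncmiSlot
  split_ifs with hle
  · have hsmaller : M - s.2 ≤ 2 * n + 1 := by omega
    constructor <;> dsimp only <;> omega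
  · have hsmaller : M - s.1 ≤ 2 * n + 1 := by omega
    constructor <;> dsimp only <;> omega

theorem iterate_ncmiSlot_eq (hs : IsCompletableWithin M n s) :
    (ncmiSlot M)^[n] s = (M, M) := by
  induction n generalizing s with
  | zero => exact hs.eq_of_zero
  | succ n ih => exact ih hs.after_ncmiSlot

end IsCompletableWithin

theorem eq_iterate_of_forall_succ_eq {α : Type*} {f : α → α} {u : ℕ → α}
    (hu : ∀ k, u (k + 1) = f (u k)) (k : ℕ) : u k = f^[k] (u 0) := by
  induction k with
  | zero => rfl
  | succ k ih => rw [hu, ih, Function.iterate_succ_apply']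

theorem ceil_max_div_le_iff {K : Type*} [Field K] [LinearOrder K] [IsStrictOrderedRing K]
    [FloorRing K] {x y p q : K} (hp : 0 < p) (hq : 0 < q) {k : ℤ} :
    ⌈max (x / p) (y / q)⌉ ≤ k ↔ x ≤ p * k ∧ y ≤ q * k := by
  rw [Int.ceil_le, max_le_iff, div_le_iff₀' hp, div_le_iff₀' hq]

/-- Dynamical core of Theorem 1 (upper bound for NCMI-batch) for two devices:
`a₀, b₀` are the initial Has-set sizes, `M` the total number of packets; in
each slot the device with the larger Has set gains 1 innovative packet while
the other gains 2, capped at `M`. -/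
theorem ncmi_batch_two_device_dynamics
    (M a₀ b₀ : ℕ) (hab : a₀ ≤ b₀) (hbM : b₀ ≤ M)
    (h : ℕ → ℕ × ℕ) (h0 : h 0 = (a₀, b₀))
    (hstep : ∀ k : ℕ,
      h (k + 1) =
        if (h k).1 ≤ (h k).2 then
          (min ((h k).1 + 2) M, min ((h k).2 + 1) M)
        else
          (min ((h k).1 + 1) M, min ((h k).2 + 2) M)) :
    ∀ k : ℕ,
      ⌈max (((((M - a₀ : ℕ) : ℚ) + ((M - b₀ : ℕ) : ℚ)) / 3))
          (((M - a₀ : ℕ) : ℚ) / 2)⌉ ≤ (k : ℤ) →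
      h k = (M, M) := by
  intro k hk
  obtain ⟨hsum, hmax⟩ := (ceil_max_div_le_iff three_pos two_pos).mp hk
  have hadd : (M - a₀) + (M - b₀) ≤ 3 * k := by exact_mod_cast hsum
  have hfst : M - a₀ ≤ 2 * k := by exact_mod_cast hmax
  have hinit : IsCompletableWithin M k (a₀, b₀) :=
    { fst_le := hab.trans hbM
      snd_le := hbM
      fst_deficit_le := hfst
      snd_deficit_le := (Nat.sub_le_sub_left hab M).trans hfst
      add_deficit_le := hadd }
  calc h k = (ncmiSlot M)^[k] (h 0) := eq_iterate_of_forall_succ_eq hstep k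
    _ = (ncmiSlot M)^[k] (a₀, b₀) := by rw [h0]
    _ = (M, M) := hinit.iterate_ncmiSlot_eq
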